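/- Let α be a composition of N, let R_α be the connected ribbon with row lengths α, and let ν be a partition of N. Then the Littlewood–Richardson coefficient c_{R_α}^ν — the number of LR tableaux of shape R_α and content ν — equals the number of standard Young tableaux of shape ν whose descent set is exactly S(α); equivalently, it equals the number of T ∈ Tab(ν,α) whose standardization T̂ has descent set S(α). -/

import Mathlib

namespace RibbonSupport

/-- A partition: a weakly decreasing list of positive integers. -/
def IsPartition (a : List ℕ) : Prop := a.Pairwise (· ≥ ·) ∧ ∀ x ∈ a, 0 < x

/-- All parts of the list are at least `m`. -/
def PartsGE (a : List ℕ) (m : ℕ) : Prop := ∀ x ∈ a, m ≤ x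

/-- Dominance order `lam ⪯ mu` on partitions of the same size. -/
def DomLE (lam mu : List ℕ) : Prop :=
  lam.sum = mu.sum ∧ ∀ i, (lam.take i).sum ≤ (mu.take i).sum

/-- The number of nonzero parts. -/
def lenp (p : List ℕ) : ℕ := p.countP (fun x => decide (x ≠ 0))

/-- `p` is an overlapping partition for the monotone ribbon with row lengths `a`:
`p` has the same length as `a`, its last entry is `0`, and consecutive entries
decrease by `0` or `1`. -/
def IsOverlapSeq (a p : List ℕ) : Prop :=
  p.length = a.length ∧ p.getD (a.length - 1) 0 = 0 ∧
    ∀ i, i + 1 < a.length →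
      p.getD i 0 = p.getD (i + 1) 0 ∨ p.getD i 0 = p.getD (i + 1) 0 + 1

/-- Rows `i` and `i+1` (0-based, top to bottom) of `R_a^p` overlap
(share exactly one column) exactly when `p_i = p_{i+1} + 1`. -/
def ovOf (p : List ℕ) : ℕ → Bool := fun i => decide (p.getD i 0 = p.getD (i + 1) 0 + 1)

def rowOffset (a : List ℕ) (i : ℕ) : ℕ := (a.take i).sum

/-- `w` is the reading word (rows right-to-left, top to bottom) of a semistandard filling of
the ribbon with row lengths `a` (top to bottom) in which consecutive rows `i`, `i+1` share
exactly one column when `ov i = true` and no column otherwise.  Semistandardness amounts to: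
within each row block the word is weakly decreasing (rows weakly increase left to right), and
at each overlapping gap the word strictly increases (columns strictly increase downwards). -/
def IsRibbonWord (a : List ℕ) (ov : ℕ → Bool) (w : List ℕ) : Prop :=
  w.length = a.sum ∧
  (∀ i j, i < a.length → j + 1 < a.getD i 0 →
    w.getD (rowOffset a i + j + 1) 0 ≤ w.getD (rowOffset a i + j) 0) ∧
  (∀ i, i + 1 < a.length → ov i = true →
    w.getD (rowOffset a (i + 1) - 1) 0 < w.getD (rowOffset a (i + 1)) 0)

/-- Yamanouchi (lattice) word: each prefix has at least as many letters `j` as `j+1`. -/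
def IsYam (w : List ℕ) : Prop := ∀ k j, (w.take k).count (j + 2) ≤ (w.take k).count (j + 1)

/-- The word `w` has content `nu` (and only positive letters). -/
def HasContent (w : List ℕ) (nu : List ℕ) : Prop :=
  (∀ j, w.count (j + 1) = nu.getD j 0) ∧ w.count 0 = 0

/-- There is an LR filling of the ribbon `(a, ov)` with content `nu`. -/
def InSupportOv (a : List ℕ) (ov : ℕ → Bool) (nu : List ℕ) : Prop :=
  ∃ w : List ℕ, IsRibbonWord a ov w ∧ IsYam w ∧ HasContent w nu

/-- `nu` is in the Schur support of the monotone ribbon `R_a^p`. -/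
def InSupport (a p nu : List ℕ) : Prop := InSupportOv a (ovOf p) nu

/-- `nu` is in the Schur support of the connected ribbon `R_a`. -/
def InSupportConn (a nu : List ℕ) : Prop := InSupportOv a (fun _ => true) nu

/-- `nu` belongs to the Schur interval `[a, (|a| - p₁, p₁)]` in dominance order. -/
def InInterval (a p nu : List ℕ) : Prop :=
  DomLE a nu ∧ DomLE nu [a.sum - p.getD 0 0, p.getD 0 0]

/-- The Schur support of `R_a^p`, as a set of partitions. -/
def SupportSet (a p : List ℕ) : Set (List ℕ) := {nu | IsPartition nu ∧ InSupport a p nu}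

/-- The Schur interval of `R_a^p`, as a set of partitions. -/
def IntervalSet (a p : List ℕ) : Set (List ℕ) := {nu | IsPartition nu ∧ InInterval a p nu}

/-- `R_a^p` has full Schur support. -/
def FullSupport (a p : List ℕ) : Prop := SupportSet a p = IntervalSet a p

/-- The Schur support of the connected ribbon `R_a`, as a set of partitions. -/
def SupportSetConn (a : List ℕ) : Set (List ℕ) := {nu | IsPartition nu ∧ InSupportConn a nu}

/-- `ϱ_i` (1-based `i`): `Σ_{q=i+1}^{ℓ(a)} a_q − p_{i+1} + 1`. -/
def rho (a p : List ℕ) (i : ℕ) : ℕ := (a.drop i).sum + 1 - p.getD i 0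

/-- Entry `j` (1-based) of the `i`-witness vector: `[ϱ_i − a_j]₊`. -/
def wit (a p : List ℕ) (i j : ℕ) : ℕ := rho a p i - a.getD (j - 1) 0

/-- Size of the `i`-witness vector. -/
def witSize (a p : List ℕ) (i : ℕ) : ℕ := ∑ j ∈ Finset.Icc 1 i, wit a p i j

/-! ### Tableaux -/

/-- Cells (0-based `(row, column)`) of the Young diagram of `lam`. -/
def cells (lam : List ℕ) : Finset (ℕ × ℕ) :=
  (Finset.range lam.length ×ˢ Finset.range (lam.sum + 1)).filter
    (fun x => x.2 < lam.getD x.1 0)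

/-- `T` is a semistandard Young tableau of shape `lam` and content `al`
(normalized to vanish off the diagram). -/
def IsTab (lam al : List ℕ) (T : ℕ × ℕ → ℕ) : Prop :=
  (∀ x, x ∉ cells lam → T x = 0) ∧
  (∀ x ∈ cells lam, 1 ≤ T x) ∧
  (∀ i c, (i, c + 1) ∈ cells lam → T (i, c) ≤ T (i, c + 1)) ∧
  (∀ i c, (i + 1, c) ∈ cells lam → T (i, c) < T (i + 1, c)) ∧
  (∀ k, ((cells lam).filter (fun x => T x = k + 1)).card = al.getD k 0)

/-- Standardization of a tableau: entries are renumbered `1, …, N` in increasing order of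
value, entries of equal value being numbered from southwest to northeast (by column). -/
def stdz (lam : List ℕ) (T : ℕ × ℕ → ℕ) : ℕ × ℕ → ℕ := fun x =>
  if x ∈ cells lam then
    ((cells lam).filter (fun y => T y < T x ∨ (T y = T x ∧ y.2 < x.2))).card + 1
  else 0

/-- `n` is a descent of the standard tableau `U`: the entry `n+1` lies in a strictly
lower row than the entry `n`. -/
def IsDescent (lam : List ℕ) (U : ℕ × ℕ → ℕ) (n : ℕ) : Prop :=
  ∃ x ∈ cells lam, ∃ y ∈ cells lam, U x = n ∧ U y = n + 1 ∧ x.1 < y.1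

/-- `S(al)`: the set of proper partial sums of the composition `al`. -/
def Sset (al : List ℕ) : Set ℕ := {n | ∃ k, 0 < k ∧ k < al.length ∧ n = (al.take k).sum}

/-- `s ∈ D(T)`: some entry `s+1` of `T` lies in a strictly lower row than some entry `s`. -/
def TabDescent (lam : List ℕ) (T : ℕ × ℕ → ℕ) (s : ℕ) : Prop :=
  ∃ x ∈ cells lam, ∃ y ∈ cells lam, T x = s ∧ T y = s + 1 ∧ x.1 < y.1

/-- The word `w_{T̂}` of `T`: its `u`-th letter (1-based) is the 1-based row index of the
entry `u` of the standardization `T̂` of `T`. -/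
def wordOf (lam : List ℕ) (T : ℕ × ℕ → ℕ) : List ℕ :=
  (List.range lam.sum).map fun n =>
    ∑ x ∈ (cells lam).filter (fun x => stdz lam T x = n + 1), (x.1 + 1)

/-- `j ∈ {2, …, ℓ(al)}` is a critical number of `T ∈ Tab(lam, al)`:
`w_{α_1+⋯+α_{j-1}} = w_{α_1+⋯+α_{j-1}+1}` in the word of `T`. -/
def CriticalNum (lam al : List ℕ) (T : ℕ × ℕ → ℕ) (j : ℕ) : Prop :=
  2 ≤ j ∧ j ≤ al.length ∧
    (wordOf lam T).getD ((al.take (j - 1)).sum - 1) 0 =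
      (wordOf lam T).getD ((al.take (j - 1)).sum) 0

/-- `j ∈ {2, …, ℓ(al)}` is a negligible critical number of `T`:
`w_{α_1+⋯+α_{j-1}} > w_{α_1+⋯+α_{j-1}+1}` in the word of `T`. -/
def NegligibleNum (lam al : List ℕ) (T : ℕ × ℕ → ℕ) (j : ℕ) : Prop :=
  2 ≤ j ∧ j ≤ al.length ∧
    (wordOf lam T).getD ((al.take (j - 1)).sum) 0 <
      (wordOf lam T).getD ((al.take (j - 1)).sum - 1) 0

/-- The overlapping partition of the ribbon encoded by its gap pattern `b`
(`b j = true` iff rows `j` and `j+1`, 0-based, overlap). -/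
def povOf (b : List Bool) : List ℕ :=
  (List.range (b.length + 1)).map fun i => (b.drop i).count true

/-! ### Connected ribbons with rows in arbitrary order -/

/-- Starting column (0-based) of row `i` of the connected ribbon with row lengths `b`. -/
def startConn (b : List ℕ) (i : ℕ) : ℕ := (b.drop (i + 1)).sum + (i + 1) - b.length

/-- Number of columns of the connected ribbon with row lengths `b`. -/
def ncols (b : List ℕ) : ℕ := b.sum + 1 - b.length

/-- Length of column `c` of the connected ribbon with row lengths `b`. -/
def colLen (b : List ℕ) (c : ℕ) : ℕ :=
  ((Finset.range b.length).filter
    (fun i => startConn b i ≤ c ∧ c < startConn b i + b.getD i 0)).card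

/-- Deletion rank of row `j`: the number of rows deleted strictly before row `j` when one
repeatedly deletes a longest remaining row in highest (most northern) position. -/
def delRank (g : List ℕ) (j : ℕ) : ℕ :=
  ((Finset.range g.length).filter
    (fun j' => g.getD j 0 < g.getD j' 0 ∨ (g.getD j' 0 = g.getD j 0 ∧ j' < j))).card

/-- The overlapping partition of the connected ribbon with row lengths `g`:
its `(d+1)`-st entry is the number of length-two columns of the ribbon remaining
after deleting `d` rows as above, i.e. the number of adjacent pairs of surviving rows. -/
def ppiList (g : List ℕ) : List ℕ :=
  (List.range g.length).map fun d =>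
    ((Finset.range (g.length - 1)).filter
      (fun j => d ≤ delRank g j ∧ d ≤ delRank g (j + 1))).card


/-! ### Proof of the counting theorem -/

lemma mem_cells {lam : List ℕ} {x : ℕ × ℕ} : x ∈ cells lam ↔ x.2 < lam.getD x.1 0 := by
  unfold cells
  simp only [Finset.mem_filter, Finset.mem_product, Finset.mem_range, and_iff_right_iff_imp]
  intro h
  have h1 : x.1 < lam.length := by
    by_contra hc
    rw [List.getD_eq_default _ _ (by omega)] at h
    omega
  refine ⟨h1, ?_⟩
  rw [List.getD_eq_getElem _ _ h1] at h
  have := List.le_sum_of_mem (List.getElem_mem h1)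
  omega

lemma getD_anti {lam : List ℕ} (h : IsPartition lam) (i : ℕ) :
    lam.getD (i + 1) 0 ≤ lam.getD i 0 := by
  by_cases h1 : i + 1 < lam.length
  · rw [List.getD_eq_getElem _ _ h1, List.getD_eq_getElem _ _ (by omega)]
    exact List.pairwise_iff_getElem.1 h.1 i (i + 1) (by omega) h1 (by omega)
  · rw [List.getD_eq_default _ _ (by omega)]
    omega

lemma rowOffset_succ (a : List ℕ) (k : ℕ) :
    rowOffset a (k + 1) = rowOffset a k + a.getD k 0 := by
  unfold rowOffset
  by_cases h : k < a.length
  · rw [List.take_add_one, List.sum_append, List.getD_eq_getElem _ _ h]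
    simp [h]
  · rw [List.getD_eq_default _ _ (by omega), List.take_of_length_le (by omega),
      List.take_of_length_le (by omega)]
    rfl

lemma rowOffset_zero (a : List ℕ) : rowOffset a 0 = 0 := by simp [rowOffset]

lemma rowOffset_length (a : List ℕ) {k : ℕ} (h : a.length ≤ k) : rowOffset a k = a.sum := by
  rw [rowOffset, List.take_of_length_le h]

lemma rowOffset_mono (a : List ℕ) : Monotone (rowOffset a) :=
  monotone_nat_of_le_succ fun k => by rw [rowOffset_succ]; omega

lemma rowOffset_le (a : List ℕ) (k : ℕ) : rowOffset a k ≤ a.sum := by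
  rw [← rowOffset_length a (le_max_left a.length k)]
  exact rowOffset_mono a (le_max_right _ _)

lemma rowOffset_replicate (N k : ℕ) : rowOffset (List.replicate N 1) k = min k N := by
  simp [rowOffset, List.take_replicate]

/-- Index of the block containing `m`. -/
noncomputable def blk (a : List ℕ) (m : ℕ) : ℕ := sInf {k | m ≤ rowOffset a k}

lemma blk_le {a : List ℕ} {m : ℕ} (hm : m ≤ a.sum) (k : ℕ) :
    blk a m ≤ k ↔ m ≤ rowOffset a k := by
  have hne : {k | m ≤ rowOffset a k}.Nonempty := ⟨a.length, by
    simp [rowOffset_length a le_rfl, hm]⟩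
  constructor
  · intro h
    have h1 : m ≤ rowOffset a (blk a m) := Nat.sInf_mem hne
    exact h1.trans (rowOffset_mono a h)
  · intro h
    exact Nat.sInf_le h

lemma getD_pos {a : List ℕ} (ha : ∀ x ∈ a, 0 < x) {k : ℕ} (hk : k < a.length) :
    0 < a.getD k 0 := by
  rw [List.getD_eq_getElem _ _ hk]
  exact ha _ (List.getElem_mem hk)

lemma mem_Sset {a : List ℕ} {n : ℕ} :
    n ∈ Sset a ↔ ∃ k, 0 < k ∧ k < a.length ∧ n = rowOffset a k := Iff.rfl

lemma not_mem_Sset {a : List ℕ} {n k : ℕ} (h1 : rowOffset a k < n)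
    (h2 : n < rowOffset a (k + 1)) : n ∉ Sset a := by
  rintro ⟨j, -, -, hj⟩
  change n = rowOffset a j at hj
  rcases Nat.lt_or_ge k j with h | h
  · have := rowOffset_mono a (show k + 1 ≤ j by omega)
    omega
  · have := rowOffset_mono a h
    omega

lemma Sset_bounds {a : List ℕ} (ha : ∀ x ∈ a, 0 < x) {n : ℕ} (h : n ∈ Sset a) :
    0 < n ∧ n < a.sum := by
  obtain ⟨k, h0, hk, rfl⟩ := mem_Sset.1 h
  constructor
  · have := getD_pos ha (show k - 1 < a.length by omega)
    have h2 := rowOffset_succ a (k - 1)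
    rw [show k - 1 + 1 = k by omega] at h2
    omega
  · have := getD_pos ha hk
    have h2 := rowOffset_succ a k
    have := rowOffset_le a (k + 1)
    omega

lemma ribbonWord_iff {a : List ℕ} (ha : ∀ x ∈ a, 0 < x) (w : List ℕ) :
    IsRibbonWord a (fun _ => true) w ↔ w.length = a.sum ∧
      ∀ n, n + 1 < a.sum → (w.getD n 0 < w.getD (n + 1) 0 ↔ n + 1 ∈ Sset a) := by
  constructor
  · rintro ⟨hl, h1, h2⟩
    refine ⟨hl, fun n hn => ⟨fun h => ?_, fun h => ?_⟩⟩
    · by_contra hS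
      have hb : blk a (n + 1) ≠ 0 := by
        intro h0
        have := (blk_le (a := a) (m := n + 1) (by omega) 0).1 h0.le
        rw [rowOffset_zero] at this
        omega
      obtain ⟨k, hk⟩ := Nat.exists_eq_succ_of_ne_zero hb
      have e1 : n + 1 ≤ rowOffset a (k + 1) := (blk_le (by omega) _).1 hk.le
      have e2 : ¬ n + 1 ≤ rowOffset a k := fun hc => by
        have := (blk_le (a := a) (m := n + 1) (by omega) k).2 hc
        omega
      have hkl : k < a.length := by
        by_contra hc
        have := rowOffset_length a (show a.length ≤ k by omega)
        omega
      have e3 : n + 1 ≠ rowOffset a (k + 1) := by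
        intro hc
        by_cases hk1 : k + 1 < a.length
        · exact hS ⟨k + 1, by omega, hk1, hc⟩
        · have := rowOffset_length a (show a.length ≤ k + 1 by omega)
          omega
      have e4 := rowOffset_succ a k
      have := h1 k (n - rowOffset a k) hkl (by omega)
      rw [show rowOffset a k + (n - rowOffset a k) = n by omega] at this
      omega
    · obtain ⟨k, h0, hk, he⟩ := mem_Sset.1 h
      have := h2 (k - 1) (by omega) rfl
      rw [show k - 1 + 1 = k by omega, ← he] at this
      exact this
  · rintro ⟨hl, h⟩
    refine ⟨hl, fun i j hi hj => ?_, fun i hi _ => ?_⟩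
    · have e4 := rowOffset_succ a i
      have e5 := rowOffset_le a (i + 1)
      have h3 := h (rowOffset a i + j) (by omega)
      have h4 : rowOffset a i + j + 1 ∉ Sset a :=
        not_mem_Sset (k := i) (by omega) (by omega)
      by_contra hc
      exact h4 (h3.1 (by omega))
    · have hm : rowOffset a (i + 1) ∈ Sset a := ⟨i + 1, by omega, hi, rfl⟩
      have hb := Sset_bounds ha hm
      have h3 := h (rowOffset a (i + 1) - 1)
      rw [show rowOffset a (i + 1) - 1 + 1 = rowOffset a (i + 1) by omega] at h3
      exact (h3 hb.2).2 hm

/-! ### Basic facts about tableaux -/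

section Tab
variable {lam al : List ℕ} {T : ℕ × ℕ → ℕ}

lemma IsTab.zero (h : IsTab lam al T) {x : ℕ × ℕ} (hx : x ∉ cells lam) : T x = 0 := h.1 x hx

lemma IsTab.pos (h : IsTab lam al T) {x : ℕ × ℕ} (hx : x ∈ cells lam) : 1 ≤ T x := h.2.1 x hx

lemma IsTab.row (h : IsTab lam al T) {i c d : ℕ} (hcd : c ≤ d) (hx : (i, d) ∈ cells lam) :
    T (i, c) ≤ T (i, d) := by
  induction d, hcd using Nat.le_induction with
  | base => exact le_rfl
  | succ d hcd ih =>
    have h1 := h.2.2.1 i d hx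
    rw [mem_cells] at hx
    exact (ih (mem_cells.2 (by simp only at hx ⊢; omega))).trans h1

lemma cells_up (hl : IsPartition lam) {i j c : ℕ} (hij : i ≤ j) (hx : (j, c) ∈ cells lam) :
    (i, c) ∈ cells lam := by
  induction j, hij using Nat.le_induction with
  | base => exact hx
  | succ j hij ih =>
    apply ih
    have := getD_anti hl j
    rw [mem_cells] at hx ⊢
    simp only at hx ⊢; omega

lemma cells_left {i c d : ℕ} (hcd : c ≤ d) (hx : (i, d) ∈ cells lam) :
    (i, c) ∈ cells lam := by
  rw [mem_cells] at hx ⊢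
  simp only at hx ⊢; omega

lemma IsTab.col (hl : IsPartition lam) (h : IsTab lam al T) {i j c : ℕ} (hij : i < j)
    (hx : (j, c) ∈ cells lam) : T (i, c) < T (j, c) := by
  induction j, hij using Nat.le_induction with
  | base => exact h.2.2.2.1 _ _ hx
  | succ j hij ih =>
    exact (ih (cells_up hl (by omega) hx)).trans (h.2.2.2.1 _ _ hx)

lemma IsTab.nw (hl : IsPartition lam) (h : IsTab lam al T) {x y : ℕ × ℕ}
    (h1 : x.1 ≤ y.1) (h2 : x.2 ≤ y.2) (hy : y ∈ cells lam) : T x ≤ T y := by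
  obtain ⟨i, c⟩ := x
  obtain ⟨j, d⟩ := y
  simp only at h1 h2
  have a1 := h.row h2 (cells_up hl h1 hy)
  rcases h1.eq_or_lt with rfl | h1
  · exact a1
  · exact a1.trans (h.col hl h1 hy).le

lemma IsTab.card_le (h : IsTab lam al T) (k : ℕ) :
    ((cells lam).filter (fun x => T x ≤ k)).card = rowOffset al k := by
  induction k with
  | zero =>
    rw [rowOffset_zero, Finset.card_eq_zero, Finset.filter_eq_empty_iff]
    intro x hx hc
    have := h.pos hx
    omega
  | succ k ih =>
    rw [rowOffset_succ, ← ih, ← h.2.2.2.2 k, ← Finset.card_union_of_disjoint]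
    · congr 1
      ext x
      simp only [Finset.mem_filter, Finset.mem_union, ← and_or_left]
      apply and_congr_right
      intro _
      omega
    · rw [Finset.disjoint_filter]
      intro x _ h1 h2
      omega

lemma IsTab.le_length (h : IsTab lam al T) (x : ℕ × ℕ) : T x ≤ al.length := by
  by_contra hc
  by_cases hx : x ∈ cells lam
  · have h1 := h.2.2.2.2 (T x - 1)
    rw [List.getD_eq_default _ _ (by omega), Finset.card_eq_zero,
      Finset.filter_eq_empty_iff] at h1
    exact h1 hx (by omega)
  · rw [h.zero hx] at hc
    omega

lemma IsTab.card_cells (h : IsTab lam al T) : (cells lam).card = al.sum := by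
  rw [← rowOffset_length al le_rfl, ← h.card_le, Finset.filter_true_of_mem]
  exact fun x _ => h.le_length x

end Tab

/-! ### Standard tableaux -/

section Std
variable {lam : List ℕ} {N : ℕ} {U : ℕ × ℕ → ℕ}

lemma std_le (h : IsTab lam (List.replicate N 1) U) (x : ℕ × ℕ) : U x ≤ N := by
  simpa using h.le_length x

lemma std_exists (h : IsTab lam (List.replicate N 1) U) {n : ℕ} (hn : n < N) :
    ∃ x ∈ cells lam, U x = n + 1 := by
  have h1 := h.2.2.2.2 n
  rw [List.getD_replicate _ hn] at h1
  obtain ⟨x, hx⟩ := Finset.card_pos.1 (h1.symm ▸ Nat.one_pos)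
  exact ⟨x, by simpa using hx⟩

lemma std_inj (h : IsTab lam (List.replicate N 1) U) {x y : ℕ × ℕ} (hx : x ∈ cells lam)
    (hy : y ∈ cells lam) (hxy : U x = U y) : x = y := by
  have h0 := h.pos hx
  have h2 := std_le h x
  have h1 := h.2.2.2.2 (U x - 1)
  rw [List.getD_replicate _ (by omega)] at h1
  refine Finset.card_le_one.1 h1.le x ?_ y ?_
  · simp only [Finset.mem_filter]
    exact ⟨hx, by omega⟩
  · simp only [Finset.mem_filter]
    exact ⟨hy, by omega⟩

lemma std_card (h : IsTab lam (List.replicate N 1) U) {k : ℕ} (hk : k ≤ N) :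
    ((cells lam).filter (fun x => U x ≤ k)).card = k := by
  rw [h.card_le, rowOffset_replicate, min_eq_left hk]

/-- If there are no descents between `U x` and `U y` then `y` is weakly above `x`. -/
lemma std_chain (h : IsTab lam (List.replicate N 1) U) {x y : ℕ × ℕ} (hx : x ∈ cells lam)
    (hy : y ∈ cells lam) (hxy : U x ≤ U y)
    (hd : ∀ n, U x ≤ n → n < U y → ¬ IsDescent lam U n) : y.1 ≤ x.1 := by
  obtain ⟨m, hm⟩ : ∃ m, U y = m := ⟨_, rfl⟩
  rw [hm] at hxy hd
  induction m, hxy using Nat.le_induction generalizing y with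
  | base => rw [std_inj h hy hx hm]
  | succ m hxm ih =>
    have h0 := h.pos hx
    have h1 := std_le h y
    obtain ⟨z, hz, hzm⟩ := std_exists h (n := m - 1) (by omega)
    have h2 := ih hz (fun n a b => hd n a (by omega)) (by omega)
    by_contra hc
    exact hd m hxm (by omega) ⟨z, hz, y, hy, by omega, hm, by omega⟩

end Std

/-! ### Standardization -/

section Stdz
variable {lam al : List ℕ} {T : ℕ × ℕ → ℕ}

lemma stdz_lt {x y : ℕ × ℕ} (hx : x ∈ cells lam)
    (hy : y ∈ cells lam) (hyx : T y < T x ∨ (T y = T x ∧ y.2 < x.2)) :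
    stdz lam T y < stdz lam T x := by
  unfold stdz
  rw [if_pos hx, if_pos hy]
  apply Nat.add_lt_add_right
  apply Finset.card_lt_card
  rw [Finset.ssubset_iff_of_subset]
  · refine ⟨y, ?_, ?_⟩
    · simp only [Finset.mem_filter]
      exact ⟨hy, hyx⟩
    · simp
  · intro z hz
    simp only [Finset.mem_filter] at hz ⊢
    refine ⟨hz.1, ?_⟩
    omega

lemma tab_total (hl : IsPartition lam) (h : IsTab lam al T) {x y : ℕ × ℕ} (hx : x ∈ cells lam)
    (hy : y ∈ cells lam) (hT : T x = T y) (hc : x.2 = y.2) : x = y := by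
  obtain ⟨i, c⟩ := x
  obtain ⟨j, d⟩ := y
  simp only at hc
  subst hc
  rcases lt_trichotomy i j with hij | rfl | hij
  · have := h.col hl hij hy
    omega
  · rfl
  · have := h.col hl hij hx
    omega

lemma stdz_inj (hl : IsPartition lam) (h : IsTab lam al T) {x y : ℕ × ℕ} (hx : x ∈ cells lam)
    (hy : y ∈ cells lam) (he : stdz lam T x = stdz lam T y) : x = y := by
  by_cases h1 : T x = T y ∧ x.2 = y.2
  · exact tab_total hl h hx hy h1.1 h1.2
  · exfalso
    rcases (show (T y < T x ∨ (T y = T x ∧ y.2 < x.2)) ∨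
      (T x < T y ∨ (T x = T y ∧ x.2 < y.2)) by omega) with h2 | h2
    · have := stdz_lt hx hy h2
      omega
    · have := stdz_lt hy hx h2
      omega

lemma stdz_isTab (hl : IsPartition lam) (h : IsTab lam al T) :
    IsTab lam (List.replicate al.sum 1) (stdz lam T) := by
  have hpos : ∀ x ∈ cells lam, 1 ≤ stdz lam T x := by
    intro x hx
    unfold stdz
    rw [if_pos hx]
    omega
  have hle : ∀ x ∈ cells lam, stdz lam T x ≤ al.sum := by
    intro x hx
    unfold stdz
    rw [if_pos hx, ← h.card_cells]
    apply Finset.card_lt_card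
    rw [Finset.ssubset_iff_of_subset (Finset.filter_subset _ _)]
    exact ⟨x, hx, by simp⟩
  refine ⟨fun x hx => ?_, hpos, fun i c hx => ?_, fun i c hx => ?_, fun k => ?_⟩
  · unfold stdz
    rw [if_neg hx]
  · have h1 := h.row (Nat.le_succ c) hx
    refine (stdz_lt hx (cells_left (Nat.le_succ c) hx) ?_).le
    simp only
    rw [Nat.succ_eq_add_one] at h1
    omega
  · exact stdz_lt hx (cells_up hl (Nat.le_succ i) hx) (Or.inl (h.2.2.2.1 i c hx))
  · by_cases hk : k < al.sum
    · rw [List.getD_replicate _ hk]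
      apply le_antisymm
      · rw [Finset.card_le_one]
        intro x hx y hy
        simp only [Finset.mem_filter] at hx hy
        exact stdz_inj hl h hx.1 hy.1 (by omega)
      · have hs := Finset.surj_on_of_inj_on_of_card_le (s := cells lam)
          (t := Finset.Icc 1 al.sum) (fun x _ => stdz lam T x)
          (fun x hx => Finset.mem_Icc.2 ⟨hpos x hx, hle x hx⟩)
          (fun x y hx hy he => stdz_inj hl h hx hy he)
          (by rw [Nat.card_Icc, h.card_cells]; omega) (k + 1)
          (Finset.mem_Icc.2 ⟨by omega, by omega⟩)
        obtain ⟨x, hx, he⟩ := hs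
        exact Finset.card_pos.2 ⟨x, by simp only [Finset.mem_filter]; exact ⟨hx, he.symm⟩⟩
    · rw [List.getD_eq_default _ _ (by simpa using hk), Finset.card_eq_zero,
        Finset.filter_eq_empty_iff]
      intro x hx hc
      have := hle x hx
      omega

lemma stdz_le_iff (h : IsTab lam al T) {x : ℕ × ℕ} (hx : x ∈ cells lam) (k : ℕ) :
    T x ≤ k ↔ stdz lam T x ≤ rowOffset al k := by
  unfold stdz
  rw [if_pos hx, ← h.card_le k]
  constructor
  · intro hk
    apply Finset.card_lt_card
    rw [Finset.ssubset_iff_of_subset]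
    · refine ⟨x, ?_, by simp⟩
      simp only [Finset.mem_filter]
      exact ⟨hx, hk⟩
    · intro z hz
      simp only [Finset.mem_filter] at hz ⊢
      exact ⟨hz.1, by omega⟩
  · intro hk
    by_contra hc
    have : ((cells lam).filter (fun x => T x ≤ k)).card ≤
        ((cells lam).filter (fun y => T y < T x ∨ (T y = T x ∧ y.2 < x.2))).card := by
      apply Finset.card_le_card
      intro z hz
      simp only [Finset.mem_filter] at hz ⊢
      exact ⟨hz.1, by omega⟩
    omega

lemma stdz_unique {T' : ℕ × ℕ → ℕ} (h : IsTab lam al T) (h' : IsTab lam al T')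
    (he : stdz lam T = stdz lam T') : T = T' := by
  funext x
  by_cases hx : x ∈ cells lam
  · apply le_antisymm
    · rw [stdz_le_iff h hx, he, ← stdz_le_iff h' hx]
    · rw [stdz_le_iff h' hx, ← he, ← stdz_le_iff h hx]
  · rw [h.zero hx, h'.zero hx]

end Stdz

lemma destdz {lam al : List ℕ} {U : ℕ × ℕ → ℕ} (hl : IsPartition lam)
    (h : IsTab lam (List.replicate al.sum 1) U)
    (hd : ∀ n, IsDescent lam U n ↔ n ∈ Sset al) :
    ∃ T, IsTab lam al T ∧ stdz lam T = U := by
  have hb : ∀ x k, blk al (U x) ≤ k ↔ U x ≤ rowOffset al k := fun x k =>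
    blk_le (std_le h x) k
  have hmono : ∀ x y, U x ≤ U y → blk al (U x) ≤ blk al (U y) := fun x y hxy =>
    (hb _ _).2 (hxy.trans ((hb _ _).1 le_rfl))
  have hpos : ∀ x ∈ cells lam, 1 ≤ blk al (U x) := by
    intro x hx
    by_contra hc
    have := (hb x 0).1 (by omega)
    rw [rowOffset_zero] at this
    have := h.pos hx
    omega
  -- within a block, going up in value means going up
  have hblock : ∀ x ∈ cells lam, ∀ y ∈ cells lam, U x ≤ U y → blk al (U x) = blk al (U y) →
      y.1 ≤ x.1 := by
    intro x hx y hy hxy he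
    refine std_chain h hx hy hxy fun n h1 h2 h3 => ?_
    have h4 := hpos x hx
    obtain ⟨k, hk⟩ : ∃ k, blk al (U x) = k + 1 := ⟨blk al (U x) - 1, by omega⟩
    have e1 : ¬ U x ≤ rowOffset al k := by rw [← hb]; omega
    have e2 : U y ≤ rowOffset al (k + 1) := by rw [← hb]; omega
    exact not_mem_Sset (k := k) (by omega) (by omega) ((hd n).1 h3)
  have hT : IsTab lam al (fun x => blk al (U x)) := by
    refine ⟨fun x hx => ?_, hpos, fun i c hx => ?_, fun i c hx => ?_, fun k => ?_⟩
    · have := (hb x 0).2 (by rw [h.zero hx]; omega)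
      simpa using this
    · exact hmono _ _ (h.2.2.1 i c hx)
    · have h1 := h.2.2.2.1 i c hx
      have hx' := cells_up hl (Nat.le_succ i) hx
      refine lt_of_le_of_ne (hmono _ _ h1.le) fun he => ?_
      have := hblock _ hx' _ hx h1.le he
      simp only at this
      omega
    · have e1 := std_card h (rowOffset_le al k)
      have e2 := std_card h (rowOffset_le al (k + 1))
      have e3 := rowOffset_succ al k
      have e4 : (cells lam).filter (fun x => U x ≤ rowOffset al (k + 1)) =
          (cells lam).filter (fun x => U x ≤ rowOffset al k) ∪
          (cells lam).filter (fun x => blk al (U x) = k + 1) := by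
        ext x
        simp only [Finset.mem_filter, Finset.mem_union, ← and_or_left, ← hb]
        apply and_congr_right
        intro _
        omega
      have e5 : Disjoint ((cells lam).filter (fun x => U x ≤ rowOffset al k))
          ((cells lam).filter (fun x => blk al (U x) = k + 1)) := by
        rw [Finset.disjoint_filter]
        intro x _ h1 h2
        rw [← hb] at h1
        omega
      rw [e4, Finset.card_union_of_disjoint e5] at e2
      beta_reduce
      omega
  refine ⟨_, hT, ?_⟩
  funext x
  by_cases hx : x ∈ cells lam
  · have hcol : ∀ x ∈ cells lam, ∀ y ∈ cells lam, U y < U x → blk al (U y) = blk al (U x) →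
        y.2 < x.2 := by
      intro x hx y hy hxy he
      have h1 := hblock y hy x hx hxy.le he
      by_contra hc
      have := h.nw hl h1 (by omega) hy
      omega
    have hp := h.pos hx
    have hN := std_le h x
    have e := std_card h (k := U x - 1) (by omega)
    unfold stdz
    rw [if_pos hx]
    have e2 : (cells lam).filter (fun y => blk al (U y) < blk al (U x) ∨
        (blk al (U y) = blk al (U x) ∧ y.2 < x.2)) =
        (cells lam).filter (fun y => U y ≤ U x - 1) := by
      apply Finset.filter_congr
      intro y hy
      constructor
      · rintro (h1 | ⟨h1, h2⟩)
        · by_contra hc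
          have := hmono x y (by omega)
          omega
        · by_contra hc
          rcases (show U x = U y ∨ U x < U y by omega) with h3 | h3
          · rw [std_inj h hx hy h3] at h2
            omega
          · have := hcol y hy x hx h3 h1.symm
            omega
      · intro h1
        have h2 := hmono y x (by omega)
        rcases h2.eq_or_lt with h3 | h3
        · exact Or.inr ⟨h3, hcol x hx y hy (by omega) h3⟩
        · exact Or.inl h3
    rw [e2, e]
    omega
  · unfold stdz
    rw [if_neg hx, h.zero hx]

/-! ### Words and standard tableaux -/

lemma count_take (w : List ℕ) (a : ℕ) (k : ℕ) :
    (w.take k).count (a + 1) = Nat.count (fun n => w.getD n 0 = a + 1) k := by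
  induction k with
  | zero => simp
  | succ k ih =>
    rw [Nat.count_succ, ← ih, List.take_add_one, List.count_append]
    congr 1
    by_cases hk : k < w.length
    · simp [hk, List.count_singleton]
    · simp [hk]

lemma count_full (w : List ℕ) (a : ℕ) :
    w.count (a + 1) = Nat.count (fun n => w.getD n 0 = a + 1) w.length := by
  rw [← count_take, List.take_length]

lemma exists_count (p : ℕ → Prop) [DecidablePred p] {N c : ℕ} (h : c < Nat.count p N) :
    ∃ m, m < N ∧ p m ∧ Nat.count p m = c := by
  induction N with
  | zero => simp at h
  | succ N ih =>
    rw [Nat.count_succ] at h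
    by_cases h1 : c < Nat.count p N
    · obtain ⟨m, a, b⟩ := ih h1
      exact ⟨m, by omega, b⟩
    · by_cases hp : p N
      · rw [if_pos hp] at h
        exact ⟨N, by omega, hp, by omega⟩
      · rw [if_neg hp] at h
        omega

/-- `w` lists the rows of `1, 2, …` in `U`. -/
def WRel (lam : List ℕ) (w : List ℕ) (U : ℕ × ℕ → ℕ) : Prop :=
  ∀ x ∈ cells lam, w.getD (U x - 1) 0 = x.1 + 1

section WRel
variable {lam w : List ℕ} {N : ℕ} {U : ℕ × ℕ → ℕ}

lemma wrel_count (h : IsTab lam (List.replicate N 1) U) (hr : WRel lam w U) (i : ℕ) {k : ℕ}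
    (hk : k ≤ N) :
    Nat.count (fun n => w.getD n 0 = i + 1) k =
      ((cells lam).filter (fun x => x.1 = i ∧ U x ≤ k)).card := by
  rw [Nat.count_eq_card_filter_range]
  symm
  apply Finset.card_bij (fun x _ => U x - 1)
  · intro x hx
    simp only [Finset.mem_filter, Finset.mem_range] at hx ⊢
    have := h.pos hx.1
    refine ⟨by omega, ?_⟩
    rw [hr x hx.1, hx.2.1]
  · intro x hx y hy he
    simp only [Finset.mem_filter] at hx hy
    have := h.pos hx.1
    have := h.pos hy.1
    exact std_inj h hx.1 hy.1 (by omega)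
  · intro n hn
    simp only [Finset.mem_filter, Finset.mem_range] at hn
    obtain ⟨x, hx, he⟩ := std_exists h (n := n) (by omega)
    refine ⟨x, ?_, by omega⟩
    have h2 := hr x hx
    rw [he, Nat.add_sub_cancel, hn.2] at h2
    simp only [Finset.mem_filter]
    exact ⟨hx, by omega, by omega⟩

lemma row_card (i : ℕ) (P : ℕ → Prop) [DecidablePred P] :
    ((cells lam).filter (fun x => x.1 = i ∧ P x.2)).card =
      ((Finset.range (lam.getD i 0)).filter P).card := by
  apply Finset.card_bij (fun x _ => x.2)
  · rintro ⟨j, c⟩ hx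
    simp only [Finset.mem_filter, mem_cells, Finset.mem_range] at hx ⊢
    obtain ⟨h1, rfl, h3⟩ := hx
    exact ⟨h1, h3⟩
  · rintro ⟨j, c⟩ hx ⟨j', c'⟩ hx' he
    simp only [Finset.mem_filter] at hx hx' he
    rw [hx.2.1, hx'.2.1, he]
  · intro c hc
    simp only [Finset.mem_filter, Finset.mem_range] at hc
    exact ⟨(i, c), by simp only [Finset.mem_filter, mem_cells]; exact ⟨hc.1, trivial, hc.2⟩, rfl⟩

lemma wrel_col (h : IsTab lam (List.replicate N 1) U) (hr : WRel lam w U) {i c : ℕ}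
    (hx : (i, c) ∈ cells lam) :
    Nat.count (fun n => w.getD n 0 = i + 1) (U (i, c) - 1) = c := by
  have h1 := h.pos hx
  have h2 := std_le h (i, c)
  rw [wrel_count h hr i (by omega)]
  have e : (cells lam).filter (fun x => x.1 = i ∧ U x ≤ U (i, c) - 1) =
      (cells lam).filter (fun x => x.1 = i ∧ x.2 < c) := by
    apply Finset.filter_congr
    rintro ⟨j, d⟩ hd
    simp only
    apply and_congr_right
    rintro rfl
    constructor
    · intro h3
      by_contra hc
      have := h.row (show c ≤ d by omega) hd
      omega
    · intro h3
      have h4 := h.row h3.le hx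
      have h5 : U (j, d) ≠ U (j, c) := fun hc => by
        have := std_inj h hd hx hc
        simp only [Prod.mk.injEq] at this
        omega
      omega
  rw [e, row_card i (fun d => d < c)]
  rw [mem_cells] at hx
  simp only at hx
  have : (Finset.range (lam.getD i 0)).filter (fun d => d < c) = Finset.range c := by
    ext d
    simp only [Finset.mem_filter, Finset.mem_range]
    omega
  rw [this, Finset.card_range]

lemma wrel_unique_right {U' : ℕ × ℕ → ℕ} (h : IsTab lam (List.replicate N 1) U)
    (h' : IsTab lam (List.replicate N 1) U') (hr : WRel lam w U) (hr' : WRel lam w U') :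
    U = U' := by
  funext x
  by_cases hx : x ∈ cells lam
  · have h1 := h.pos hx
    have h2 := h'.pos hx
    have := Nat.count_injective (p := fun n => w.getD n 0 = x.1 + 1) (hr x hx) (hr' x hx)
      ((wrel_col h hr hx).trans (wrel_col h' hr' hx).symm)
    omega
  · rw [h.zero hx, h'.zero hx]

lemma wrel_unique_left {w' : List ℕ} (h : IsTab lam (List.replicate N 1) U)
    (hw : w.length = N) (hw' : w'.length = N) (hr : WRel lam w U) (hr' : WRel lam w' U) :
    w = w' := by
  apply List.ext_getElem (hw.trans hw'.symm)
  intro n h1 h2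
  obtain ⟨x, hx, he⟩ := std_exists h (n := n) (by omega)
  have a1 := hr x hx
  have a2 := hr' x hx
  rw [he, Nat.add_sub_cancel] at a1 a2
  rw [← List.getD_eq_getElem _ 0 h1, ← List.getD_eq_getElem _ 0 h2, a1, a2]

lemma wrel_descent (h : IsTab lam (List.replicate N 1) U) (hr : WRel lam w U) (m : ℕ) :
    IsDescent lam U m ↔ ∃ n, m = n + 1 ∧ n + 1 < N ∧ w.getD n 0 < w.getD (n + 1) 0 := by
  constructor
  · rintro ⟨x, hx, y, hy, h1, h2, h3⟩
    have := h.pos hx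
    have := std_le h y
    have a1 := hr x hx
    have a2 := hr y hy
    refine ⟨m - 1, by omega, by omega, ?_⟩
    rw [h1] at a1
    rw [h2] at a2
    rw [a1, show m - 1 + 1 = m + 1 - 1 by omega, a2]
    omega
  · rintro ⟨n, rfl, h1, h2⟩
    obtain ⟨x, hx, ex⟩ := std_exists h (n := n) (by omega)
    obtain ⟨y, hy, ey⟩ := std_exists h (n := n + 1) h1
    have a1 := hr x hx
    have a2 := hr y hy
    rw [ex, Nat.add_sub_cancel] at a1
    rw [ey, Nat.add_sub_cancel] at a2
    exact ⟨x, hx, y, hy, ex, ey, by omega⟩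

lemma wrel_ribbon {al : List ℕ} (hal : ∀ x ∈ al, 0 < x)
    (h : IsTab lam (List.replicate al.sum 1) U) (hw : w.length = al.sum) (hr : WRel lam w U) :
    IsRibbonWord al (fun _ => true) w ↔ ∀ n, IsDescent lam U n ↔ n ∈ Sset al := by
  rw [ribbonWord_iff hal]
  simp only [wrel_descent h hr, hw, true_and]
  constructor
  · intro h1 n
    constructor
    · rintro ⟨m, rfl, h2, h3⟩
      exact (h1 m h2).1 h3
    · intro h2
      have h3 := Sset_bounds hal h2
      have e : n - 1 + 1 = n := by omega
      refine ⟨n - 1, e.symm, by omega, (h1 (n - 1) (by omega)).2 (by rwa [e])⟩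
  · intro h1 n hn
    rw [← h1]
    constructor
    · intro h2
      exact ⟨n, rfl, hn, h2⟩
    · rintro ⟨m, h2, h3, h4⟩
      obtain rfl : n = m := by omega
      exact h4

lemma exists_word (hl : IsPartition lam) (h : IsTab lam (List.replicate N 1) U) :
    ∃ w : List ℕ, w.length = N ∧ WRel lam w U ∧ IsYam w ∧ HasContent w lam := by
  choose f hf hU using fun n : Fin N => std_exists h n.2
  have hlen : (List.ofFn fun n => (f n).1 + 1).length = N := by simp
  have hr : WRel lam (List.ofFn fun n => (f n).1 + 1) U := by
    intro x hx
    have h1 := h.pos hx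
    have h2 := std_le h x
    rw [List.getD_eq_getElem _ _ (by rw [hlen]; omega), List.getElem_ofFn]
    have := std_inj h (hf ⟨U x - 1, by omega⟩) hx (by rw [hU]; simp only; omega)
    rw [this]
  refine ⟨_, hlen, hr, ?_, ?_, ?_⟩
  · intro k j
    have key : ∀ k ≤ N, ((List.ofFn fun n => (f n).1 + 1).take k).count (j + 2) ≤
        ((List.ofFn fun n => (f n).1 + 1).take k).count (j + 1) := by
      intro k hk
      rw [count_take _ (j + 1), count_take, wrel_count h hr _ hk, wrel_count h hr _ hk]
      apply Finset.card_le_card_of_injOn (fun x => (x.1 - 1, x.2))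
      · rintro ⟨i, c⟩ hx
        simp only [Finset.coe_filter, Set.mem_ofPred_eq] at hx ⊢
        obtain ⟨h1, rfl, h3⟩ := hx
        have := h.2.2.2.1 j c h1
        exact ⟨cells_up hl (Nat.le_succ j) h1, by omega, by simp only [Nat.add_sub_cancel]; omega⟩
      · rintro ⟨i, c⟩ hx ⟨i', c'⟩ hx' he
        simp only [Finset.coe_filter, Set.mem_ofPred_eq, Prod.mk.injEq] at hx hx' he ⊢
        omega
    rcases Nat.le_total k N with hk | hk
    · exact key k hk
    · have := key N le_rfl
      rw [List.take_of_length_le (by omega)] at this ⊢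
      exact this
  · intro j
    rw [count_full, hlen, wrel_count h hr _ le_rfl]
    have e : (cells lam).filter (fun x => x.1 = j ∧ U x ≤ N) =
        (cells lam).filter (fun x => x.1 = j ∧ True) := by
      apply Finset.filter_congr
      intro x _
      simp [std_le h x]
    rw [e, row_card j (fun _ => True)]
    simp
  · rw [List.count_eq_zero]
    simp [List.mem_ofFn]

lemma exists_tab (hw : w.length = N) (hy : IsYam w) (hc : HasContent w lam) :
    ∃ U, IsTab lam (List.replicate N 1) U ∧ WRel lam w U := by
  have hcount : ∀ i, Nat.count (fun n => w.getD n 0 = i + 1) N = lam.getD i 0 := by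
    intro i
    rw [← hc.1, count_full, hw]
  have hex : ∀ x : ℕ × ℕ, ∃ m, x ∈ cells lam → m < N ∧ w.getD m 0 = x.1 + 1 ∧
      Nat.count (fun n => w.getD n 0 = x.1 + 1) m = x.2 := by
    intro x
    by_cases hx : x ∈ cells lam
    · rw [mem_cells, ← hcount] at hx
      obtain ⟨m, hm⟩ := exists_count _ hx
      exact ⟨m, fun _ => hm⟩
    · exact ⟨0, fun h => absurd h hx⟩
  choose g hg using hex
  obtain ⟨U, hval, hzero⟩ : ∃ U : ℕ × ℕ → ℕ, (∀ x ∈ cells lam, U x = g x + 1) ∧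
      ∀ x, x ∉ cells lam → U x = 0 :=
    ⟨fun x => if x ∈ cells lam then g x + 1 else 0, fun x hx => if_pos hx,
      fun x hx => if_neg hx⟩
  refine ⟨U, ⟨hzero, fun x hx => ?_,
    fun i c hx => ?_, fun i c hx => ?_, fun k => ?_⟩, fun x hx => ?_⟩
  · rw [hval x hx]
    omega
  · have hx' := cells_left (Nat.le_succ c) hx
    rw [hval _ hx, hval _ hx']
    by_contra hcon
    have := Nat.count_monotone (fun n => w.getD n 0 = i + 1)
      (show g (i, c + 1) ≤ g (i, c) by omega)
    rw [(hg _ hx).2.2, (hg _ hx').2.2] at this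
    simp only at this
    omega
  · obtain ⟨a1, a2, a3⟩ := hg _ hx
    simp only at a2 a3
    have b1 : Nat.count (fun n => w.getD n 0 = i + 1 + 1) (g (i + 1, c) + 1) = c + 1 := by
      rw [Nat.count_succ, a3, if_pos a2]
    have b2 := hy (g (i + 1, c) + 1) i
    rw [count_take _ (i + 1), count_take, b1, Nat.count_succ, if_neg (by omega)] at b2
    have hx' : (i, c) ∈ cells lam := by
      rw [mem_cells, ← hcount]
      have := Nat.count_monotone (fun n => w.getD n 0 = i + 1) a1.le
      simp only at this ⊢
      omega
    rw [hval _ hx, hval _ hx']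
    by_contra hcon
    have := Nat.count_monotone (fun n => w.getD n 0 = i + 1)
      (show g (i + 1, c) ≤ g (i, c) by omega)
    rw [(hg _ hx').2.2] at this
    simp only at this
    omega
  · by_cases hk : k < N
    · rw [List.getD_replicate _ hk]
      have hpos : w.getD k 0 ≠ 0 := by
        rw [List.getD_eq_getElem _ _ (by omega)]
        intro h0
        exact List.count_eq_zero.1 hc.2 (h0 ▸ List.getElem_mem (by omega))
      obtain ⟨i, hi⟩ := Nat.exists_eq_succ_of_ne_zero hpos
      rw [Nat.succ_eq_add_one] at hi
      rw [Finset.card_eq_one]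
      have hcell : (i, Nat.count (fun n => w.getD n 0 = i + 1) k) ∈ cells lam := by
        rw [mem_cells, ← hcount]
        exact Nat.count_strict_mono hi hk
      refine ⟨(i, Nat.count (fun n => w.getD n 0 = i + 1) k), ?_⟩
      ext ⟨j, c⟩
      simp only [Finset.mem_filter, Finset.mem_singleton]
      constructor
      · rintro ⟨h1, h2⟩
        rw [hval _ h1] at h2
        obtain ⟨a1, a2, a3⟩ := hg _ h1
        have h3 : g (j, c) = k := by omega
        rw [h3] at a2 a3
        simp only at a2 a3
        obtain rfl : i = j := by omega
        rw [a3]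
      · intro he
        rw [he]
        refine ⟨hcell, ?_⟩
        rw [hval _ hcell]
        obtain ⟨a1, a2, a3⟩ := hg _ hcell
        rw [Nat.count_injective (p := fun n => w.getD n 0 = i + 1) a2 hi a3]
    · rw [List.getD_eq_default _ _ (by simpa using hk), Finset.card_eq_zero,
        Finset.filter_eq_empty_iff]
      intro x hx hcon
      rw [hval _ hx] at hcon
      have := (hg _ hx).1
      omega
  · simp only [hval _ hx, Nat.add_sub_cancel]
    exact (hg _ hx).2.1

end WRel

lemma card_eq_of_rel {A B : Type*} {P : A → Prop} {Q : B → Prop} (R : A → B → Prop)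
    (h1 : ∀ a, P a → ∃ b, Q b ∧ R a b) (h2 : ∀ b, Q b → ∃ a, P a ∧ R a b)
    (h3 : ∀ a b b', P a → Q b → Q b' → R a b → R a b' → b = b')
    (h4 : ∀ a a' b, P a → P a' → Q b → R a b → R a' b → a = a') :
    Nat.card {a // P a} = Nat.card {b // Q b} := by
  choose f hf using h1
  refine Nat.card_congr (Equiv.ofBijective
    (fun a : {a // P a} => (⟨f a.1 a.2, (hf a.1 a.2).1⟩ : {b // Q b})) ⟨?_, ?_⟩)
  · rintro ⟨a, ha⟩ ⟨a', ha'⟩ he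
    simp only [Subtype.mk.injEq] at he ⊢
    exact h4 a a' (f a ha) ha ha' (hf a ha).1 (hf a ha).2 (he ▸ (hf a' ha').2)
  · rintro ⟨b, hb⟩
    obtain ⟨a, ha, hr⟩ := h2 b hb
    refine ⟨⟨a, ha⟩, ?_⟩
    simp only [Subtype.mk.injEq]
    exact h3 a _ _ ha (hf a ha).1 hb (hf a ha).2 hr

/-- Theorem `th:gessel` / Corollary `l3new`(a): for a composition `al` of
`N` and a partition `nu` of `N`, the LR coefficient `c_{R_al}^{nu}` of the connected ribbon
`R_al` equals the number of standard Young tableaux of shape `nu` with descent set exactly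
`S(al)`, and equals the number of `T ∈ Tab(nu, al)` whose standardization has descent set
exactly `S(al)`. -/
theorem connected_ribbon_LR_coefficient_count
    (al nu : List ℕ) (hal : ∀ x ∈ al, 0 < x) (hnu : IsPartition nu)
    (hsum : nu.sum = al.sum) :
    Nat.card {w : List ℕ //
        IsRibbonWord al (fun _ => true) w ∧ IsYam w ∧ HasContent w nu} =
      Nat.card {U : ℕ × ℕ → ℕ //
        IsTab nu (List.replicate nu.sum 1) U ∧ ∀ n, IsDescent nu U n ↔ n ∈ Sset al} ∧
    Nat.card {w : List ℕ //
        IsRibbonWord al (fun _ => true) w ∧ IsYam w ∧ HasContent w nu} =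
      Nat.card {T : ℕ × ℕ → ℕ //
        IsTab nu al T ∧ ∀ n, IsDescent nu (stdz nu T) n ↔ n ∈ Sset al} := by
  have e1 : Nat.card {w : List ℕ //
        IsRibbonWord al (fun _ => true) w ∧ IsYam w ∧ HasContent w nu} =
      Nat.card {U : ℕ × ℕ → ℕ //
        IsTab nu (List.replicate nu.sum 1) U ∧ ∀ n, IsDescent nu U n ↔ n ∈ Sset al} := by
    rw [hsum]
    apply card_eq_of_rel (WRel nu)
    · rintro w ⟨h1, h2, h3⟩
      obtain ⟨U, hU, hr⟩ := exists_tab h1.1 h2 h3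
      exact ⟨U, ⟨hU, (wrel_ribbon hal hU h1.1 hr).1 h1⟩, hr⟩
    · rintro U ⟨hU, hd⟩
      obtain ⟨w, hw, hr, h2, h3⟩ := exists_word hnu hU
      exact ⟨w, ⟨(wrel_ribbon hal hU hw hr).2 hd, h2, h3⟩, hr⟩
    · rintro w U U' - ⟨hU, -⟩ ⟨hU', -⟩ hr hr'
      exact wrel_unique_right hU hU' hr hr'
    · rintro w w' U ⟨h1, -⟩ ⟨h1', -⟩ ⟨hU, -⟩ hr hr'
      exact wrel_unique_left hU h1.1 h1'.1 hr hr'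
  refine ⟨e1, e1.trans ?_⟩
  rw [hsum]
  apply card_eq_of_rel (fun U T => stdz nu T = U)
  · rintro U ⟨hU, hd⟩
    obtain ⟨T, hT, rfl⟩ := destdz hnu hU hd
    exact ⟨T, ⟨hT, hd⟩, rfl⟩
  · rintro T ⟨hT, hd⟩
    exact ⟨_, ⟨stdz_isTab hnu hT, hd⟩, rfl⟩
  · rintro U T T' - ⟨hT, -⟩ ⟨hT', -⟩ h h'
    exact stdz_unique hT hT' (h.trans h'.symm)
  · rintro U U' T - - - h h'
    exact h.symm.trans h'

end RibbonSupport
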